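/- Let A be a commutative ring which is also a ℚ-algebra, and let Δ : A → A be a ℚ-linear map with Δ ∘ Δ = 0. Define the bracket {a,b} := Δ(ab) − (Δa)·b − a·(Δb), and assume the Leibniz rule {a, bc} = {a,b}·c + b·{a,c} for all a, b, c ∈ A. Let I ∈ A be nilpotent, and set exp(I) := Σ_{n=0}^{N−1} Iⁿ/n! for any N with I^N = 0 (this finite sum is independent of the choice of such N). Then Δ(exp I) = exp(I) · (ΔI + ½·{I,I}). -/

import Mathlib

/-!
The Leibniz rule gives `Δ 1 = 0` and `{I, I ^ (n + 1)} = (n + 1) I ^ n {I, I}`. Unfolding the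
bracket, this yields `Δ (I ^ n) = n I ^ (n - 1) Δ I + (n choose 2) I ^ (n - 2) {I, I}`, i.e.
`Δ` sends the divided power `I ^ (n + 2) / (n + 2)!` to
`I ^ (n + 1) / (n + 1)! * Δ I + 1 / 2 * I ^ n / n! * {I, I}`. Hence the partial sums
`S n = ∑ k < n, I ^ k / k!` satisfy `Δ (S (n + 2)) = S (n + 1) * Δ I + 1 / 2 * S n * {I, I}`
for every `I`, nilpotent or not. If `I ^ N = 0`, then `S (N + 2) = S (N + 1) = S N`, and the case
`n = N` is the claim.
-/

/-- The bracket associated to a Batalin–Vilkovisky operator `Δ`: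
`{a,b} := Δ(ab) − (Δa)·b − a·(Δb)`. -/
noncomputable def bvBracket {A : Type*} [CommRing A] [Algebra ℚ A]
    (Δ : A →ₗ[ℚ] A) (a b : A) : A :=
  Δ (a * b) - Δ a * b - a * Δ b

section

variable {A : Type*} [CommRing A] [Algebra ℚ A] (Δ : A →ₗ[ℚ] A)

lemma bv_map_one (leib : ∀ a b c : A,
    bvBracket Δ a (b * c) = bvBracket Δ a b * c + b * bvBracket Δ a c) : Δ 1 = 0 := by
  have h := leib 1 1 1
  simpa [bvBracket] using h

lemma bvBracket_pow_succ (leib : ∀ a b c : A,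
    bvBracket Δ a (b * c) = bvBracket Δ a b * c + b * bvBracket Δ a c) (I : A) (n : ℕ) :
    bvBracket Δ I (I ^ (n + 1)) = (n + 1) * I ^ n * bvBracket Δ I I := by
  induction n with
  | zero => simp
  | succ n ih =>
    rw [pow_succ I (n + 1), leib, ih]
    push_cast
    ring

/-- `Δ (I ^ (n + 2))`, doubled so that all coefficients are integers. -/
lemma two_mul_bv_map_pow (leib : ∀ a b c : A,
    bvBracket Δ a (b * c) = bvBracket Δ a b * c + b * bvBracket Δ a c) (I : A) (n : ℕ) :
    2 * Δ (I ^ (n + 2)) =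
      2 * (n + 2) * I ^ (n + 1) * Δ I + (n + 2) * (n + 1) * I ^ n * bvBracket Δ I I := by
  have key (m : ℕ) : Δ (I ^ (m + 2)) =
      Δ I * I ^ (m + 1) + I * Δ (I ^ (m + 1)) + (m + 1) * I ^ m * bvBracket Δ I I := by
    rw [← bvBracket_pow_succ Δ leib I m, bvBracket, ← pow_succ' I (m + 1)]
    ring
  induction n with
  | zero =>
    rw [key 0]
    simp only [zero_add, pow_one, pow_zero, Nat.cast_zero]
    ring
  | succ n ih =>
    rw [key (n + 1)]
    push_cast
    linear_combination I * ih

/-- `Δ` on divided powers. -/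
lemma bv_map_divided_pow (leib : ∀ a b c : A,
    bvBracket Δ a (b * c) = bvBracket Δ a b * c + b * bvBracket Δ a c) (I : A) (n : ℕ) :
    Δ (((n + 2).factorial : ℚ)⁻¹ • I ^ (n + 2)) =
      (((n + 1).factorial : ℚ)⁻¹ • I ^ (n + 1)) * Δ I +
        ((n.factorial : ℚ)⁻¹ • I ^ n) * ((1 / 2 : ℚ) • bvBracket Δ I I) := by
  have h : Δ (I ^ (n + 2)) = (n + 2 : ℚ) • (I ^ (n + 1) * Δ I) +
      ((n + 2) * (n + 1) / 2 : ℚ) • (I ^ n * bvBracket Δ I I) := by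
    have h2 : (2 : ℚ) • Δ (I ^ (n + 2)) = (2 : ℚ) • ((n + 2 : ℚ) • (I ^ (n + 1) * Δ I) +
        ((n + 2) * (n + 1) / 2 : ℚ) • (I ^ n * bvBracket Δ I I)) := by
      rw [smul_add, smul_smul, smul_smul, mul_div_cancel₀ _ (two_ne_zero' ℚ)]
      simp only [Algebra.smul_def, map_mul, map_add, map_natCast, map_ofNat, map_one]
      linear_combination two_mul_bv_map_pow Δ leib I n
    exact smul_right_injective A (two_ne_zero' ℚ) h2
  rw [map_smul, h]
  simp only [smul_add, smul_smul, smul_mul_assoc, mul_smul_comm, Nat.factorial_succ]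
  have hn : (n.factorial : ℚ) ≠ 0 := by positivity
  have h1 : (n + 1 : ℚ) ≠ 0 := by positivity
  have h2 : (n + 2 : ℚ) ≠ 0 := by positivity
  congr 2
  · push_cast
    rw [show (n + 1 + 1 : ℚ) = n + 2 by ring]
    field_simp
  · push_cast
    rw [show (n + 1 + 1 : ℚ) = n + 2 by ring]
    field_simp

/-- `Δ` on the partial sums of the exponential series; nilpotency plays no role here. -/
lemma bv_map_partial_exp (leib : ∀ a b c : A,
    bvBracket Δ a (b * c) = bvBracket Δ a b * c + b * bvBracket Δ a c) (I : A) (n : ℕ) :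
    Δ (∑ k ∈ Finset.range (n + 2), (k.factorial : ℚ)⁻¹ • I ^ k) =
      (∑ k ∈ Finset.range (n + 1), (k.factorial : ℚ)⁻¹ • I ^ k) * Δ I +
        (∑ k ∈ Finset.range n, (k.factorial : ℚ)⁻¹ • I ^ k) *
          ((1 / 2 : ℚ) • bvBracket Δ I I) := by
  induction n with
  | zero => simp [Finset.sum_range_succ, bv_map_one Δ leib]
  | succ n ih =>
    rw [Finset.sum_range_succ _ (n + 2), map_add, ih, bv_map_divided_pow Δ leib,
      Finset.sum_range_succ _ (n + 1), Finset.sum_range_succ _ n]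
    ring

end

theorem bv_delta_exp {A : Type*} [CommRing A] [Algebra ℚ A]
    (Δ : A →ₗ[ℚ] A) (hΔ : Δ ∘ₗ Δ = 0)
    (leib : ∀ a b c : A,
      bvBracket Δ a (b * c) = bvBracket Δ a b * c + b * bvBracket Δ a c)
    (I : A) (N : ℕ) (hIN : I ^ N = 0) :
    Δ (∑ n ∈ Finset.range N, (n.factorial : ℚ)⁻¹ • I ^ n) =
      (∑ n ∈ Finset.range N, (n.factorial : ℚ)⁻¹ • I ^ n)
        * (Δ I + (1 / 2 : ℚ) • bvBracket Δ I I) := by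
  have h := bv_map_partial_exp Δ leib I N
  have h1 : I ^ (N + 1) = 0 := pow_eq_zero_of_le (Nat.le_succ N) hIN
  rw [Finset.sum_range_succ _ (N + 1), Finset.sum_range_succ _ N, hIN, h1, smul_zero, add_zero,
    smul_zero, add_zero] at h
  rw [h, mul_add]
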